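/- Let X be a Banach space and let f, g : X → ℝ be two convex, continuous functions that are bounded from below, such that |∇f|(x) = |∇g|(x) for every x ∈ X. Then there exists c ∈ ℝ such that f = g + c. -/

import Mathlib

open Filter Topology
open scoped ENNReal Classical

/-- The metric slope of `f : M → ℝ` at `x`: it is `0` if `x` is an isolated point of `M`,
and otherwise `limsup_{y → x, y ≠ x} (f x - f y)⁺ / d(x,y)`, with values in `[0, +∞]`. -/
noncomputable def metricSlope {M : Type*} [MetricSpace M] (f : M → ℝ) (x : M) : ℝ≥0∞ :=
  if 𝓝[≠] x = ⊥ then 0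
  else Filter.limsup (fun y => ENNReal.ofReal (max (f x - f y) 0 / dist x y)) (𝓝[≠] x)

/-!
For convex functions the slope is a global quantity: `|∇g|(x)` is the supremum of all the difference
quotients `(g x - g z)⁺ / d(x, z)`. Fix `l > 1` and `y`. Since `|∇f| = |∇g|`, every point `x` with
`g y < g x` admits `z ≠ x` along which `l * f` decreases at least as much as `g`, and at least at
the rate `(g x - g y) / d(x, y)`. Suppose `g x₀ - g y > l * (f x₀ - inf f)`. On the set where
`g - l * f` is at least its value at `x₀`, the gap `g x - g y` stays above some `δ > 0`, so
`l * f` can be decreased forever at rate `δ / d(x, y)`. As `∫ dr / r` diverges at infinity, such a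
descent of a function bounded below remains in a bounded set, and Ekeland's variational principle
forbids it. Letting `l → 1` gives `g - inf g ≤ f - inf f`, and the situation is symmetric.
-/

section Ekeland

section PseudoMetricSpace

variable {M : Type*} [PseudoMetricSpace M] {φ : M → ℝ}

/-- The set of points below `x` in the partial order of Ekeland's variational principle. -/
def descentSet (φ : M → ℝ) (x : M) : Set M :=
  {z | dist x z ≤ φ x - φ z}

lemma self_mem_descentSet (φ : M → ℝ) (x : M) : x ∈ descentSet φ x := by
  simp [descentSet]

lemma descentSet_subset_of_mem {x z : M} (hz : z ∈ descentSet φ x) :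
    descentSet φ z ⊆ descentSet φ x := by
  intro w hw
  simp only [descentSet, Set.mem_ofPred_eq] at hz hw ⊢
  linarith [dist_triangle x z w]

lemma isClosed_descentSet (hφ : LowerSemicontinuous φ) (x : M) : IsClosed (descentSet φ x) := by
  have hlsc : LowerSemicontinuous fun z => dist x z + φ z :=
    (continuous_const.dist continuous_id).lowerSemicontinuous.add hφ
  convert! hlsc.isClosed_preimage (φ x) using 1
  ext z
  simp [descentSet, le_sub_iff_add_le]

lemma exists_mem_descentSet_subset_closedBall (hφ : BddBelow (Set.range φ)) (x : M) {ε : ℝ}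
    (hε : 0 < ε) :
    ∃ w ∈ descentSet φ x, descentSet φ w ⊆ Metric.closedBall w ε := by
  have hne : (φ '' descentSet φ x).Nonempty := ⟨φ x, x, self_mem_descentSet φ x, rfl⟩
  have hbdd : BddBelow (φ '' descentSet φ x) := hφ.mono (Set.image_subset_range _ _)
  obtain ⟨_, ⟨w, hw, rfl⟩, hw_lt⟩ := exists_lt_of_csInf_lt hne (lt_add_of_pos_right _ hε)
  refine ⟨w, hw, fun z hz => ?_⟩
  have hz_ge : sInf (φ '' descentSet φ x) ≤ φ z :=
    csInf_le hbdd ⟨z, descentSet_subset_of_mem hw hz, rfl⟩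
  rw [Metric.mem_closedBall']
  exact (show dist w z ≤ φ w - φ z from hz).trans (by linarith)

end PseudoMetricSpace

variable {M : Type*} [MetricSpace M] [CompleteSpace M]

theorem exists_descentSet_eq_singleton [Nonempty M] {φ : M → ℝ} (hφ : LowerSemicontinuous φ)
    (hbdd : BddBelow (Set.range φ)) : ∃ p, descentSet φ p = {p} := by
  choose next hnext_mem hnext_ball using fun (n : ℕ) (x : M) =>
    exists_mem_descentSet_subset_closedBall hbdd x (pow_pos (one_half_pos (α := ℝ)) n)
  let u : ℕ → M := fun n => Nat.rec (Classical.arbitrary M) next n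
  let S : ℕ → Set M := fun n => descentSet φ (u (n + 1))
  have hS_anti : Antitone S :=
    antitone_nat_of_succ_le fun n => descentSet_subset_of_mem (hnext_mem (n + 1) (u (n + 1)))
  have hS_ball : ∀ n, S n ⊆ Metric.closedBall (u (n + 1)) ((1 / 2) ^ n) :=
    fun n => hnext_ball n (u n)
  have hS_bdd : ∀ n, Bornology.IsBounded (S n) :=
    fun n => Metric.isBounded_closedBall.subset (hS_ball n)
  have hS_diam : Tendsto (fun n => Metric.diam (S n)) atTop (𝓝 0) := by
    have hpow : Tendsto (fun n : ℕ => 2 * (1 / 2 : ℝ) ^ n) atTop (𝓝 0) := by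
      simpa using (tendsto_pow_atTop_nhds_zero_of_lt_one one_half_pos.le one_half_lt_one).const_mul
        (2 : ℝ)
    exact squeeze_zero (fun n => Metric.diam_nonneg) (fun n =>
      (Metric.diam_mono (hS_ball n) Metric.isBounded_closedBall).trans
        (Metric.diam_closedBall (by positivity))) hpow
  obtain ⟨p, hp⟩ : (⋂ n, S n).Nonempty :=
    Metric.nonempty_iInter_of_nonempty_biInter (fun n => isClosed_descentSet hφ _) hS_bdd
      (fun N => ⟨u (N + 1), Set.mem_iInter₂.2 fun n hn => hS_anti hn (self_mem_descentSet φ _)⟩)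
      hS_diam
  rw [Set.mem_iInter] at hp
  refine ⟨p, Set.Subset.antisymm (fun z hz => ?_) (by simp [self_mem_descentSet])⟩
  have hdist : dist z p ≤ 0 := ge_of_tendsto' hS_diam fun n =>
    Metric.dist_le_diam_of_mem (hS_bdd n) (descentSet_subset_of_mem (hp n) hz) (hp n)
  exact dist_le_zero.1 hdist

lemma exp_mul_dist_le_of_dist_le_dist_mul_sub {M : Type*} [PseudoMetricSpace M] {F : M → ℝ}
    {p y z : M} (h : dist p z ≤ dist p y * (F p - F z)) :
    Real.exp (F z) * dist z y ≤ Real.exp (F p) * dist p y :=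
  calc Real.exp (F z) * dist z y
      ≤ Real.exp (F z) * (dist p y * (F p - F z + 1)) := by
        gcongr
        linarith [dist_triangle_left z y p]
    _ ≤ Real.exp (F z) * (dist p y * Real.exp (F p - F z)) := by
        gcongr
        exact Real.add_one_le_exp _
    _ = Real.exp (F p) * dist p y := by
        rw [Real.exp_sub]
        field_simp

theorem exists_forall_dist_le_dist_mul_sub_imp_eq {F : M → ℝ} {A : Set M} (hF : Continuous F)
    (hbdd : BddBelow (Set.range F)) (hA : IsClosed A) (hA_ne : A.Nonempty) (y : M) :
    ∃ p ∈ A, ∀ z ∈ A, dist p z ≤ dist p y * (F p - F z) → z = p := by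
  obtain ⟨x₀, hx₀⟩ := hA_ne
  obtain ⟨m, hm⟩ := hbdd
  replace hm : ∀ x, m ≤ F x := fun x => hm ⟨x, rfl⟩
  -- Steps of the descent do not increase `exp F * dist · y`, so they never leave `B`.
  let B : Set M := A ∩ {x | Real.exp (F x) * dist x y ≤ Real.exp (F x₀) * dist x₀ y}
  have hB : IsClosed B := hA.inter (isClosed_le (by fun_prop) continuous_const)
  let R : ℝ := Real.exp (F x₀) * dist x₀ y / Real.exp m
  have hR : 0 ≤ R := by positivity
  have hB_dist : ∀ x ∈ B, dist x y ≤ R := by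
    intro x hx
    rw [le_div_iff₀' (Real.exp_pos m)]
    exact (mul_le_mul_of_nonneg_right (Real.exp_le_exp.2 (hm x)) dist_nonneg).trans hx.2
  have : CompleteSpace B := hB.completeSpace_coe
  have : Nonempty B := ⟨⟨x₀, hx₀, le_refl (Real.exp (F x₀) * dist x₀ y)⟩⟩
  obtain ⟨⟨p, hpB⟩, hp⟩ := exists_descentSet_eq_singleton (φ := fun x : B => R * F x)
    (by fun_prop : Continuous fun x : B => R * F x).lowerSemicontinuous
    ⟨R * m, by rintro _ ⟨x, rfl⟩; exact mul_le_mul_of_nonneg_left (hm x) hR⟩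
  refine ⟨p, hpB.1, fun z hzA hz => ?_⟩
  rcases (dist_nonneg (x := p) (y := y)).eq_or_lt' with hpy | hpy
  · rw [hpy, zero_mul] at hz
    exact (dist_le_zero.1 hz).symm
  have hzB : z ∈ B := ⟨hzA, (exp_mul_dist_le_of_dist_le_dist_mul_sub hz).trans hpB.2⟩
  have hF_sub : 0 ≤ F p - F z := nonneg_of_mul_nonneg_right (dist_nonneg.trans hz) hpy
  have hz_mem : (⟨z, hzB⟩ : B) ∈ descentSet (fun x : B => R * F x) ⟨p, hpB⟩ :=
    calc dist p z ≤ dist p y * (F p - F z) := hz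
      _ ≤ R * (F p - F z) := mul_le_mul_of_nonneg_right (hB_dist p hpB) hF_sub
      _ = R * F p - R * F z := mul_sub _ _ _
  rw [hp] at hz_mem
  exact congrArg Subtype.val hz_mem

end Ekeland

section Slope

variable {M : Type*} [MetricSpace M] {f : M → ℝ} {x : M}

lemma metricSlope_eq_limsup (f : M → ℝ) (x : M) :
    metricSlope f x =
      limsup (fun z => ENNReal.ofReal (max (f x - f z) 0 / dist x z)) (𝓝[≠] x) := by
  unfold metricSlope
  split_ifs with h
  · simp [h]
  · rfl

/-- The global slope of `f` at `x`: the analogue of `metricSlope f x` in which the upper limit of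
the difference quotients is replaced by their supremum over the whole space. It is the form
in which convexity is exploited in a general metric space. The point `z = x` contributes
`0 / 0 = 0`. -/
noncomputable def globalSlope (f : M → ℝ) (x : M) : ℝ≥0∞ :=
  ⨆ z, ENNReal.ofReal (max (f x - f z) 0 / dist x z)

lemma metricSlope_le_globalSlope (f : M → ℝ) (x : M) : metricSlope f x ≤ globalSlope f x := by
  rw [metricSlope_eq_limsup]
  exact limsup_le_iSup

lemma sub_le_toReal_globalSlope_mul_dist (h : globalSlope f x ≠ ∞) (z : M) :
    f x - f z ≤ (globalSlope f x).toReal * dist x z := by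
  rcases eq_or_ne x z with rfl | hxz
  · simp
  have hquot : max (f x - f z) 0 / dist x z ≤ (globalSlope f x).toReal :=
    (ENNReal.ofReal_le_iff_le_toReal h).1
      (le_iSup (fun z => ENNReal.ofReal (max (f x - f z) 0 / dist x z)) z)
  exact (le_max_left _ _).trans ((div_le_iff₀ (dist_pos.2 hxz)).1 hquot)

lemma exists_ne_mul_dist_lt_sub_of_lt_metricSlope {κ : ℝ} (hκ : 0 ≤ κ)
    (h : ENNReal.ofReal κ < metricSlope f x) : ∃ z ≠ x, κ * dist x z < f x - f z := by
  rw [metricSlope_eq_limsup] at h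
  obtain ⟨z, hz, hzx⟩ :=
    ((frequently_lt_of_lt_limsup (by isBoundedDefault) h).and_eventually self_mem_nhdsWithin).exists
  replace hzx : z ≠ x := hzx
  have hlt : κ * dist x z < max (f x - f z) 0 := by
    rwa [ENNReal.ofReal_lt_ofReal_iff_of_nonneg hκ, lt_div_iff₀ (dist_pos.2 hzx.symm)] at hz
  have hnonneg : 0 ≤ κ * dist x z := by positivity
  exact ⟨z, hzx, (lt_max_iff.1 hlt).resolve_right hnonneg.not_gt⟩

lemma metricSlope_le_of_lipschitzOnWith {K : NNReal} {s : Set M} (hs : s ∈ 𝓝 x)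
    (hf : LipschitzOnWith K f s) : metricSlope f x ≤ K := by
  rw [metricSlope_eq_limsup]
  refine limsup_le_of_le (by isBoundedDefault) ?_
  filter_upwards [nhdsWithin_le_nhds hs] with z hz
  rw [← ENNReal.ofReal_coe_nnreal]
  refine ENNReal.ofReal_le_ofReal (div_le_of_le_mul₀ dist_nonneg K.2 (max_le ?_ (by positivity)))
  exact (le_abs_self _).trans (hf.dist_le_mul x (mem_of_mem_nhds hs) z hz)

lemma metricSlope_ne_top_of_locallyLipschitz (hf : LocallyLipschitz f) (x : M) :
    metricSlope f x ≠ ∞ := by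
  obtain ⟨K, s, hs, hK⟩ := hf x
  exact ne_top_of_le_ne_top ENNReal.coe_ne_top (metricSlope_le_of_lipschitzOnWith hs hK)

end Slope

section Convex

variable {X : Type*} [NormedAddCommGroup X] [NormedSpace ℝ X] {f : X → ℝ}

lemma div_dist_le_div_dist_lineMap_of_convexOn (hf : ConvexOn ℝ Set.univ f) (x z : X) {t : ℝ}
    (ht₀ : 0 < t) (ht₁ : t ≤ 1) :
    max (f x - f z) 0 / dist x z ≤
      max (f x - f (AffineMap.lineMap x z t)) 0 / dist x (AffineMap.lineMap x z t) := by
  have hconv : f (AffineMap.lineMap x z t) ≤ (1 - t) * f x + t * f z := by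
    rw [AffineMap.lineMap_apply_module]
    exact hf.2 trivial trivial (sub_nonneg.2 ht₁) ht₀.le (sub_add_cancel 1 t)
  rw [dist_left_lineMap, Real.norm_of_nonneg ht₀.le, ← mul_div_mul_left _ _ ht₀.ne',
    mul_max_of_nonneg _ _ ht₀.le, mul_zero]
  gcongr
  linarith

lemma globalSlope_le_metricSlope_of_convexOn (hf : ConvexOn ℝ Set.univ f) (x : X) :
    globalSlope f x ≤ metricSlope f x := by
  refine iSup_le fun z => ?_
  rcases eq_or_ne x z with rfl | hxz
  · simp
  have htendsto : Tendsto (AffineMap.lineMap x z : ℝ → X) (𝓝[>] 0) (𝓝[≠] x) := by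
    refine tendsto_nhdsWithin_iff.2 ⟨?_, ?_⟩
    · have hcont : Continuous (AffineMap.lineMap x z : ℝ → X) := AffineMap.lineMap_continuous
      simpa using (hcont.tendsto 0).mono_left nhdsWithin_le_nhds
    · filter_upwards [self_mem_nhdsWithin] with t ht
      simpa [AffineMap.lineMap_eq_left_iff, hxz] using (Set.mem_Ioi.1 ht).ne'
  rw [metricSlope_eq_limsup]
  refine le_limsup_of_frequently_le (htendsto.frequently (Eventually.frequently ?_))
    (by isBoundedDefault)
  filter_upwards [Ioc_mem_nhdsGT one_pos] with t ht
  exact ENNReal.ofReal_le_ofReal (div_dist_le_div_dist_lineMap_of_convexOn hf x z ht.1 ht.2)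

lemma globalSlope_eq_metricSlope_of_convexOn (hf : ConvexOn ℝ Set.univ f) (x : X) :
    globalSlope f x = metricSlope f x :=
  (globalSlope_le_metricSlope_of_convexOn hf x).antisymm (metricSlope_le_globalSlope f x)

lemma locallyLipschitz_of_convexOn_of_continuous (hf : ConvexOn ℝ Set.univ f)
    (hcont : Continuous f) : LocallyLipschitz f :=
  locallyLipschitzOn_univ.1
    ((hf.locallyLipschitzOn_iff_continuousOn isOpen_univ).2 hcont.continuousOn)

end Convex

section Determination

variable {M : Type*} [MetricSpace M] {f g : M → ℝ}

lemma exists_descent_of_globalSlope_le_metricSlope {x y : M}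
    (hslope : globalSlope g x ≤ metricSlope f x) (hfin : globalSlope g x ≠ ∞) {l : ℝ} (hl : 1 < l)
    (hxy : g y < g x) :
    ∃ z ≠ x, g x - g z ≤ l * (f x - f z) ∧
      (g x - g y) * dist x z ≤ dist x y * (l * (f x - f z)) := by
  have hl₀ : 0 < l := one_pos.trans hl
  set s := (globalSlope g x).toReal
  have hg : ∀ z, g x - g z ≤ s * dist x z := sub_le_toReal_globalSlope_mul_dist hfin
  have hs : 0 < s := pos_of_mul_pos_left ((sub_pos.2 hxy).trans_le (hg y)) dist_nonneg
  have hlt : ENNReal.ofReal (s / l) < metricSlope f x := by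
    refine lt_of_lt_of_le ?_ hslope
    rw [ENNReal.ofReal_lt_iff_lt_toReal (by positivity) hfin]
    exact div_lt_self hs hl
  obtain ⟨z, hzx, hz⟩ := exists_ne_mul_dist_lt_sub_of_lt_metricSlope (by positivity) hlt
  have hf : s * dist x z ≤ l * (f x - f z) := by
    rw [div_mul_eq_mul_div, div_lt_iff₀' hl₀] at hz
    exact hz.le
  refine ⟨z, hzx, (hg z).trans hf, ?_⟩
  calc (g x - g y) * dist x z ≤ s * dist x y * dist x z := by gcongr; exact hg y
    _ = dist x y * (s * dist x z) := by ring
    _ ≤ dist x y * (l * (f x - f z)) := by gcongr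

variable [CompleteSpace M]

lemma sub_le_mul_sub_of_globalSlope_le_metricSlope (hf : Continuous f) (hg : Continuous g)
    (hslope : ∀ x, globalSlope g x ≤ metricSlope f x) (hfin : ∀ x, globalSlope g x ≠ ∞)
    {m : ℝ} (hm : ∀ x, m ≤ f x) {l : ℝ} (hl : 1 < l) (x y : M) :
    g x - g y ≤ l * (f x - m) := by
  by_contra! hcon
  have hl₀ : 0 < l := one_pos.trans hl
  set δ := g x - g y - l * (f x - m)
  have hδ : 0 < δ := sub_pos.2 hcon
  let A : Set M := {w | g x - l * f x ≤ g w - l * f w}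
  have hA : IsClosed A := isClosed_le (by fun_prop) (by fun_prop)
  have hgap : ∀ w ∈ A, δ ≤ g w - g y := by
    intro w hw
    have hw' : g x - l * f x ≤ g w - l * f w := hw
    linarith [mul_le_mul_of_nonneg_left (hm w) hl₀.le]
  have hbdd : BddBelow (Set.range fun w => l * f w / δ) :=
    ⟨l * m / δ, by rintro _ ⟨w, rfl⟩; dsimp only; gcongr; exact hm w⟩
  obtain ⟨p, hpA, hp⟩ := exists_forall_dist_le_dist_mul_sub_imp_eq (F := fun w => l * f w / δ)
    (by fun_prop) hbdd hA ⟨x, le_refl (g x - l * f x)⟩ y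
  obtain ⟨z, hzp, hdecr, hrate⟩ := exists_descent_of_globalSlope_le_metricSlope (hslope p) (hfin p)
    hl (sub_pos.1 (hδ.trans_le (hgap p hpA)))
  have hzA : z ∈ A := (show g x - l * f x ≤ g p - l * f p from hpA).trans (by linarith)
  refine hzp (hp z hzA ?_)
  rw [← sub_div, ← mul_sub, ← mul_div_assoc, le_div_iff₀' hδ]
  exact (mul_le_mul_of_nonneg_right (hgap p hpA) dist_nonneg).trans hrate

lemma sub_le_sub_iInf_of_globalSlope_le_metricSlope (hf : Continuous f) (hg : Continuous g)
    (hslope : ∀ x, globalSlope g x ≤ metricSlope f x) (hfin : ∀ x, globalSlope g x ≠ ∞)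
    (hbdd : BddBelow (Set.range f)) (x y : M) :
    g x - g y ≤ f x - ⨅ w, f w := by
  have hlim : Tendsto (fun l : ℝ => l * (f x - ⨅ w, f w)) (𝓝[>] 1) (𝓝 (f x - ⨅ w, f w)) := by
    simpa using (tendsto_id.mul_const (f x - ⨅ w, f w)).mono_left
      (nhdsWithin_le_nhds (a := (1 : ℝ)) (s := Set.Ioi 1))
  refine ge_of_tendsto hlim ?_
  filter_upwards [self_mem_nhdsWithin] with l hl
  exact sub_le_mul_sub_of_globalSlope_le_metricSlope hf hg hslope hfin (ciInf_le hbdd) hl x y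

theorem determination_convex_general (hf : Continuous f) (hg : Continuous g)
    (hf_slope : ∀ x, globalSlope f x = metricSlope f x)
    (hg_slope : ∀ x, globalSlope g x = metricSlope g x)
    (hfin : ∀ x, metricSlope f x ≠ ∞) (hbdd : BddBelow (Set.range f))
    (h : ∀ x, metricSlope f x = metricSlope g x) :
    ∃ c : ℝ, ∀ x, f x = g x + c := by
  have hg_sub : ∀ x y, g x - g y ≤ f x - ⨅ w, f w :=
    sub_le_sub_iInf_of_globalSlope_le_metricSlope hf hg
      (fun x => (hg_slope x).trans_le (h x).ge) (fun x => by rw [hg_slope, ← h]; exact hfin x) hbdd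
  have hg_bdd : BddBelow (Set.range g) := by
    rcases isEmpty_or_nonempty M with _ | ⟨⟨x⟩⟩
    · simp
    · exact ⟨g x - (f x - ⨅ w, f w), by rintro _ ⟨y, rfl⟩; linarith [hg_sub x y]⟩
  have hf_sub : ∀ x y, f x - f y ≤ g x - ⨅ w, g w :=
    sub_le_sub_iInf_of_globalSlope_le_metricSlope hg hf
      (fun x => (hf_slope x).trans_le (h x).le) (fun x => by rw [hf_slope]; exact hfin x) hg_bdd
  refine ⟨(⨅ w, f w) - ⨅ w, g w, fun x => ?_⟩
  have : Nonempty M := ⟨x⟩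
  have hg_le : g x - (f x - ⨅ w, f w) ≤ ⨅ w, g w := le_ciInf fun y => by linarith [hg_sub x y]
  have hf_le : f x - (g x - ⨅ w, g w) ≤ ⨅ w, f w := le_ciInf fun y => by linarith [hf_sub x y]
  linarith

end Determination

/-- Slope determination, convex case: two convex continuous functions on a Banach space,
bounded from below, with equal metric slopes, coincide up to an additive constant. -/
theorem determination_convex {X : Type*}
    [NormedAddCommGroup X] [NormedSpace ℝ X] [CompleteSpace X]
    (f g : X → ℝ)
    (hf_cvx : ConvexOn ℝ Set.univ f) (hg_cvx : ConvexOn ℝ Set.univ g)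
    (hf_cont : Continuous f) (hg_cont : Continuous g)
    (hf_bdd : BddBelow (Set.range f)) (hg_bdd : BddBelow (Set.range g))
    (h : ∀ x : X, metricSlope f x = metricSlope g x) :
    ∃ c : ℝ, ∀ x : X, f x = g x + c :=
  determination_convex_general hf_cont hg_cont (globalSlope_eq_metricSlope_of_convexOn hf_cvx)
    (globalSlope_eq_metricSlope_of_convexOn hg_cvx)
    (metricSlope_ne_top_of_locallyLipschitz
      (locallyLipschitz_of_convexOn_of_continuous hf_cvx hf_cont)) hf_bdd h
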